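/- arXiv:1009.2022 — 3 statements merged into one kernel-verified Lean document; each statement's English description precedes it below -/
import Mathlib

section
/- Let ν ≥ 2 be an integer. There exists a unique ratio r = a/b > 0 with the following property: writing Ω_il = Ω_il(r) = (ν−1)(1 + ((r+1)/2)(√(1 + 4r/((ν−1)(r+1)²)) − 1)), the identity γ(ν−1, Ω_il)/(1 − γ(ν+1, Ω_il)) = ν(Ω_il − ν + 1)/(Ω_il(ν − Ω_il)) holds; equivalently, Ω_il coincides with the unique minimizer Ω* > 0 of the asymptotic inverse-linear risk, characterized by (Ω*)²/(ν(ν−1)) = r(1 − γ(ν+1, Ω*))/γ(ν−1, Ω*). -/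
/-!
Write `Ω = Ω_il(r)` and `y = Ω - (ν - 1)`. The quadratic equation for `Ω` is linear in `r`, so
`r ↦ Ω` is a bijection from `(0, ∞)` onto `(ν - 1, ν)` with inverse
`Ω ↦ Ω (Ω - ν + 1) / ((ν - 1) (ν - Ω))`, and it suffices to see that the first identity has exactly
one solution `Ω` in that interval; the second identity is the first one after `r` is eliminated.

With `P = γ(ν - 1, Ω)` and `D = Ω^(ν-1) e^(-Ω) / Γ(ν)`, the recurrence of the incomplete gamma
function gives `γ(ν + 1, Ω) = P - D (1 + Ω / ν)`. Solving the identity for `P` turns it into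
`P = y (ν + (ν + Ω) D) / (Ω (ν - Ω) + ν y)`. The difference of the two sides is positive at
`Ω = ν - 1`, negative at `Ω = ν`, and strictly decreasing in between: since `P' = (ν - 1) D / Ω` and
`D' = -y D / Ω`, its derivative is, up to a positive denominator, minus a polynomial in `ν - 1`, `y`
and `D` that is visibly positive.
-/

open Real Filter Set

/-- Normalized lower incomplete gamma function. -/
noncomputable def lowerGamma (t u : ℝ) : ℝ :=
  (∫ s in (0:ℝ)..u, s ^ (t - 1) * Real.exp (-s)) / Real.Gamma t

/-- `Ω_il` as a function of the ratio `r = a/b`. -/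
noncomputable def OmegaR (ν : ℕ) (r : ℝ) : ℝ :=
  ((ν : ℝ) - 1) *
    (1 + ((r + 1) / 2) * (Real.sqrt (1 + 4 * r / (((ν : ℝ) - 1) * (r + 1) ^ 2)) - 1))

open MeasureTheory

section LowerGamma

variable {t u : ℝ}

lemma integrableOn_rpow_mul_exp_neg (ht : 0 < t) :
    IntegrableOn (fun s : ℝ => s ^ (t - 1) * Real.exp (-s)) (Ioi 0) := by
  simpa only [mul_comm] using Real.GammaIntegral_convergent ht

lemma intervalIntegrable_rpow_mul_exp_neg (ht : 0 < t) (hu : 0 ≤ u) :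
    IntervalIntegrable (fun s : ℝ => s ^ (t - 1) * Real.exp (-s)) volume 0 u :=
  (intervalIntegrable_iff_integrableOn_Ioc_of_le hu).2
    ((integrableOn_rpow_mul_exp_neg ht).mono_set Ioc_subset_Ioi_self)

lemma lowerGamma_pos (ht : 0 < t) (hu : 0 < u) : 0 < lowerGamma t u :=
  div_pos
    (intervalIntegral.intervalIntegral_pos_of_pos_on
      (intervalIntegrable_rpow_mul_exp_neg ht hu.le)
      (fun _ hs => mul_pos (rpow_pos_of_pos hs.1 _) (Real.exp_pos _)) hu)
    (Real.Gamma_pos_of_pos ht)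

lemma one_sub_lowerGamma (ht : 0 < t) (hu : 0 ≤ u) :
    1 - lowerGamma t u = (∫ s in Ioi u, s ^ (t - 1) * Real.exp (-s)) / Real.Gamma t := by
  have hint := integrableOn_rpow_mul_exp_neg ht
  have hsplit := intervalIntegral.integral_interval_add_Ioi hint
    (hint.mono_set (Ioi_subset_Ioi hu))
  have hΓ : Real.Gamma t = ∫ s in Ioi (0 : ℝ), s ^ (t - 1) * Real.exp (-s) := by
    simpa only [mul_comm] using Real.Gamma_eq_integral ht
  rw [lowerGamma, one_sub_div (Real.Gamma_pos_of_pos ht).ne', hΓ, ← hsplit, add_sub_cancel_left]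

lemma lowerGamma_lt_one (ht : 0 < t) (hu : 0 ≤ u) : lowerGamma t u < 1 := by
  have hpos : ∀ s ∈ Ioi u, 0 < s ^ (t - 1) * Real.exp (-s) := fun s hs =>
    mul_pos (rpow_pos_of_pos (hu.trans_lt hs) _) (Real.exp_pos _)
  have hsupp : Ioi u ⊆ Function.support fun s : ℝ => s ^ (t - 1) * Real.exp (-s) :=
    fun s hs => (hpos s hs).ne'
  have htail : 0 < ∫ s in Ioi u, s ^ (t - 1) * Real.exp (-s) := by
    rw [setIntegral_pos_iff_support_of_nonneg_ae
      (ae_restrict_of_forall_mem measurableSet_Ioi fun s hs => (hpos s hs).le)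
      ((integrableOn_rpow_mul_exp_neg ht).mono_set (Ioi_subset_Ioi hu)),
      inter_eq_right.2 hsupp, Real.volume_Ioi]
    exact ENNReal.zero_lt_top
  rw [← sub_pos, one_sub_lowerGamma ht hu]
  exact div_pos htail (Real.Gamma_pos_of_pos ht)

/-- The amount `u ^ t * e ^ (-u) / Γ(t + 1)` by which `γ(·, u)` drops from `t` to `t + 1`. The
derivatives of `γ(t, ·)` and of the drop itself are multiples of it. -/
noncomputable def gammaStep (t u : ℝ) : ℝ :=
  u ^ t * Real.exp (-u) / Real.Gamma (t + 1)

lemma gammaStep_pos (ht : -1 < t) (hu : 0 < u) : 0 < gammaStep t u :=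
  div_pos (mul_pos (rpow_pos_of_pos hu t) (Real.exp_pos _))
    (Real.Gamma_pos_of_pos (by linarith))

lemma gammaStep_add_one (ht : t + 1 ≠ 0) (hu : u ≠ 0) :
    gammaStep (t + 1) u = u / (t + 1) * gammaStep t u := by
  rw [gammaStep, gammaStep, Real.rpow_add_one hu, Real.Gamma_add_one ht]
  field_simp

lemma hasDerivAt_rpow_mul_exp_neg (hu : u ≠ 0) :
    HasDerivAt (fun s : ℝ => s ^ t * Real.exp (-s))
      (t * (u ^ (t - 1) * Real.exp (-u)) - u ^ t * Real.exp (-u)) u := by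
  refine ((Real.hasDerivAt_rpow_const (Or.inl hu)).mul (hasDerivAt_neg u).exp).congr_deriv ?_
  ring

lemma hasDerivAt_gammaStep (hu : u ≠ 0) :
    HasDerivAt (gammaStep t) ((t / u - 1) * gammaStep t u) u := by
  refine ((hasDerivAt_rpow_mul_exp_neg hu).div_const (Real.Gamma (t + 1))).congr_deriv ?_
  rw [gammaStep, Real.rpow_sub_one hu]
  ring

lemma hasDerivAt_lowerGamma (ht : 0 < t) (hu : 0 < u) :
    HasDerivAt (lowerGamma t) (t / u * gammaStep t u) u := by
  have hcont : ContinuousOn (fun s : ℝ => s ^ (t - 1) * Real.exp (-s)) (Ioi 0) := fun s hs =>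
    (hasDerivAt_rpow_mul_exp_neg (ne_of_gt hs)).continuousAt.continuousWithinAt
  refine ((intervalIntegral.integral_hasDerivAt_right
    (intervalIntegrable_rpow_mul_exp_neg ht hu.le)
    (hcont.stronglyMeasurableAtFilter isOpen_Ioi u hu)
    (hcont.continuousAt (Ioi_mem_nhds hu))).div_const (Real.Gamma t)).congr_deriv ?_
  rw [gammaStep, Real.Gamma_add_one ht.ne', Real.rpow_sub_one hu.ne']
  field_simp

lemma lowerGamma_add_one (ht : 0 < t) (hu : 0 ≤ u) :
    lowerGamma (t + 1) u = lowerGamma t u - gammaStep t u := by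
  have hint := intervalIntegrable_rpow_mul_exp_neg ht hu
  have hint' : IntervalIntegrable (fun s : ℝ => s ^ t * Real.exp (-s)) volume 0 u := by
    simpa only [add_sub_cancel_right] using
      intervalIntegrable_rpow_mul_exp_neg (add_pos ht one_pos) hu
  have hcont : ContinuousOn (fun s : ℝ => s ^ t * Real.exp (-s)) (Icc 0 u) :=
    ((Real.continuous_rpow_const ht.le).mul (by fun_prop)).continuousOn
  have hparts : t * (∫ s in (0 : ℝ)..u, s ^ (t - 1) * Real.exp (-s))
      - ∫ s in (0 : ℝ)..u, s ^ t * Real.exp (-s) = u ^ t * Real.exp (-u) := by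
    rw [← intervalIntegral.integral_const_mul, ← intervalIntegral.integral_sub
      (hint.const_mul t) hint', intervalIntegral.integral_eq_sub_of_hasDerivAt_of_le hu hcont
      (fun s hs => hasDerivAt_rpow_mul_exp_neg hs.1.ne') ((hint.const_mul t).sub hint'),
      Real.zero_rpow ht.ne', zero_mul, sub_zero]
  have hΓ : Real.Gamma t ≠ 0 := (Real.Gamma_pos_of_pos ht).ne'
  rw [lowerGamma, lowerGamma, gammaStep, Real.Gamma_add_one ht.ne', add_sub_cancel_right, ← hparts]
  field_simp
  ring

lemma lowerGamma_add_two (ht : 0 < t) (hu : 0 < u) :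
    lowerGamma (t + 2) u = lowerGamma t u - (1 + u / (t + 1)) * gammaStep t u := by
  have ht' : 0 < t + 1 := add_pos ht one_pos
  rw [← one_add_one_eq_two, ← add_assoc, lowerGamma_add_one ht' hu.le, lowerGamma_add_one ht hu.le,
    gammaStep_add_one ht'.ne' hu.ne']
  ring

end LowerGamma

section IdentityGap

variable {ν Ω : ℝ}

/-- The difference of the two sides of the identity
`γ(ν - 1, Ω) / (1 - γ(ν + 1, Ω)) = ν (Ω - ν + 1) / (Ω (ν - Ω))` after it has been solved for
`γ(ν - 1, Ω)`, with `γ(ν + 1, Ω)` eliminated by the recurrence. -/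
noncomputable def identityGap (ν Ω : ℝ) : ℝ :=
  lowerGamma (ν - 1) Ω
    - (Ω - ν + 1) * (ν + (ν + Ω) * gammaStep (ν - 1) Ω) / (Ω * (ν - Ω) + ν * (Ω - ν + 1))

lemma identityGap_denom_pos (hν : 1 < ν) (hΩ : Ω ∈ Icc (ν - 1) ν) :
    0 < Ω * (ν - Ω) + ν * (Ω - ν + 1) := by
  have : 0 ≤ (Ω - (ν - 1)) * (ν - Ω) := mul_nonneg (sub_nonneg.2 hΩ.1) (sub_nonneg.2 hΩ.2)
  linarith [hΩ.1]

lemma lowerGamma_div_eq_iff_identityGap_eq_zero (hν : 1 < ν) (hΩ : Ω ∈ Ioo (ν - 1) ν) :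
    lowerGamma (ν - 1) Ω / (1 - lowerGamma (ν + 1) Ω) = ν * (Ω - ν + 1) / (Ω * (ν - Ω)) ↔
      identityGap ν Ω = 0 := by
  have hΩ0 : 0 < Ω := (sub_pos.2 hν).trans hΩ.1
  have hupper : 0 < ν - Ω := sub_pos.2 hΩ.2
  have hdenom := identityGap_denom_pos hν (Ioo_subset_Icc_self hΩ)
  have htail : 1 - lowerGamma (ν + 1) Ω ≠ 0 :=
    (sub_pos.2 (lowerGamma_lt_one (by linarith) hΩ0.le)).ne'
  have hrec : lowerGamma (ν + 1) Ω
      = lowerGamma (ν - 1) Ω - (1 + Ω / ν) * gammaStep (ν - 1) Ω := by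
    convert lowerGamma_add_two (sub_pos.2 hν) hΩ0 using 2 <;> ring_nf
  have hcross : ν * (Ω - ν + 1) * (1 - lowerGamma (ν + 1) Ω)
      = (Ω - ν + 1) * (ν + (ν + Ω) * gammaStep (ν - 1) Ω)
        - lowerGamma (ν - 1) Ω * (ν * (Ω - ν + 1)) := by
    rw [hrec]
    field_simp
    ring
  rw [div_eq_div_iff htail (mul_pos hΩ0 hupper).ne', hcross, identityGap, sub_eq_zero,
    eq_div_iff hdenom.ne', eq_sub_iff_add_eq, ← mul_add]

lemma hasDerivAt_identityGap {m y : ℝ} (hm : 0 < m) (hy : y ∈ Icc 0 1) :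
    HasDerivAt (identityGap (m + 1))
      (-(((m + 1) * (m + y ^ 2) * (m + y)
          + (m ^ 3 + m ^ 2 * (1 + 2 * y ^ 2) + m * (y + y ^ 3 + y ^ 4) + y ^ 3 * (1 - y + y ^ 2))
            * gammaStep m (m + y))
        / ((m + y) * (m + 2 * y - y ^ 2) ^ 2)))
      (m + y) := by
  have hΩ : 0 < m + y := add_pos_of_pos_of_nonneg hm hy.1
  have hdenom : (m + y) * (m + 1 - (m + y)) + (m + 1) * (m + y - (m + 1) + 1)
      = m + 2 * y - y ^ 2 := by ring
  have hdenom0 : m + 2 * y - y ^ 2 ≠ 0 := hdenom ▸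
    (identityGap_denom_pos (by linarith) ⟨by linarith [hy.1], by linarith [hy.2]⟩).ne'
  have hlin : HasDerivAt (fun Ω : ℝ => Ω - (m + 1) + 1) 1 (m + y) :=
    ((hasDerivAt_id _).sub_const _).add_const _
  have hnum := hlin.mul ((((hasDerivAt_id (m + y)).const_add (m + 1)).mul
    (hasDerivAt_gammaStep (t := m) hΩ.ne')).const_add (m + 1))
  have hden := ((hasDerivAt_id (m + y)).mul ((hasDerivAt_id (m + y)).const_sub (m + 1))).add
    (hlin.const_mul (m + 1))
  have hgap := (hasDerivAt_lowerGamma hm hΩ).sub (hnum.div hden (hdenom.trans_ne hdenom0))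
  unfold identityGap
  simp only [add_sub_cancel_right]
  refine hgap.congr_deriv ?_
  simp only [Pi.add_apply, Pi.mul_apply, id, hdenom]
  generalize hQ : m + 2 * y - y ^ 2 = Q at hdenom0 ⊢
  field_simp
  rw [← hQ]
  ring

lemma exists_hasDerivAt_identityGap_neg (hν : 1 < ν) (hΩ : Ω ∈ Icc (ν - 1) ν) :
    ∃ d < 0, HasDerivAt (identityGap ν) d Ω := by
  obtain ⟨m, rfl⟩ : ∃ m, ν = m + 1 := ⟨ν - 1, by ring⟩
  obtain ⟨y, rfl⟩ : ∃ y, Ω = m + y := ⟨Ω - m, by ring⟩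
  have hm : 0 < m := by linarith
  have hy : y ∈ Icc (0 : ℝ) 1 := ⟨by linarith [hΩ.1], by linarith [hΩ.2]⟩
  refine ⟨_, neg_neg_of_pos ?_, hasDerivAt_identityGap hm hy⟩
  have hy0 : 0 ≤ y := hy.1
  have hy1 : 0 ≤ 1 - y := sub_nonneg.2 hy.2
  have hD : 0 < gammaStep m (m + y) := gammaStep_pos (by linarith) (by positivity)
  have hdenom : 0 < m + 2 * y - y ^ 2 := by
    linarith [identityGap_denom_pos hν hΩ]
  positivity

lemma continuousOn_identityGap (hν : 1 < ν) : ContinuousOn (identityGap ν) (Icc (ν - 1) ν) :=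
  fun _ hΩ =>
    let ⟨_, _, hderiv⟩ := exists_hasDerivAt_identityGap_neg hν hΩ
    hderiv.continuousAt.continuousWithinAt

lemma strictAntiOn_identityGap (hν : 1 < ν) : StrictAntiOn (identityGap ν) (Icc (ν - 1) ν) :=
  strictAntiOn_of_deriv_neg (convex_Icc _ _) (continuousOn_identityGap hν) fun _ hΩ =>
    let ⟨_, hneg, hderiv⟩ := exists_hasDerivAt_identityGap_neg hν (interior_subset hΩ)
    hderiv.deriv.trans_lt hneg

lemma identityGap_left_pos (hν : 1 < ν) : 0 < identityGap ν (ν - 1) := by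
  have hzero : ν - 1 - ν + 1 = 0 := by ring
  rw [identityGap, hzero, zero_mul, zero_div, sub_zero]
  exact lowerGamma_pos (sub_pos.2 hν) (sub_pos.2 hν)

lemma identityGap_right_neg (hν : 1 < ν) : identityGap ν ν < 0 := by
  have hν0 : 0 < ν := one_pos.trans hν
  have hD : 0 < gammaStep (ν - 1) ν := gammaStep_pos (by linarith) hν0
  have hP : lowerGamma (ν - 1) ν < 1 := lowerGamma_lt_one (sub_pos.2 hν) hν0.le
  have hval : identityGap ν ν = lowerGamma (ν - 1) ν - (1 + 2 * gammaStep (ν - 1) ν) := by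
    rw [identityGap]
    field_simp
    ring
  linarith

lemma existsUnique_identityGap_eq_zero (hν : 1 < ν) :
    ∃! Ω, Ω ∈ Ioo (ν - 1) ν ∧ identityGap ν Ω = 0 := by
  obtain ⟨Ω, hΩ, hzero⟩ := intermediate_value_Ioo' (by linarith) (continuousOn_identityGap hν)
    ⟨identityGap_right_neg hν, identityGap_left_pos hν⟩
  exact ⟨Ω, ⟨hΩ, hzero⟩, fun Ω' ⟨hΩ', hzero'⟩ => (strictAntiOn_identityGap hν).injOn
    (Ioo_subset_Icc_self hΩ') (Ioo_subset_Icc_self hΩ) (hzero'.trans hzero.symm)⟩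

end IdentityGap

section OmegaIL

variable {ν r Ω : ℝ}

/-- `Ω_il` as a function of the ratio `r = a/b`, for a real parameter `ν`. -/
noncomputable def omegaIL (ν r : ℝ) : ℝ :=
  (ν - 1) * (1 + ((r + 1) / 2) * (Real.sqrt (1 + 4 * r / ((ν - 1) * (r + 1) ^ 2)) - 1))

/-- The ratio `r = a/b` for which `Ω_il(r) = Ω`, obtained by solving the quadratic equation of
`Ω_il` for `r`. -/
noncomputable def ratioOfOmega (ν Ω : ℝ) : ℝ :=
  Ω * (Ω - ν + 1) / ((ν - 1) * (ν - Ω))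

lemma sub_one_lt_omegaIL (hν : 1 < ν) (hr : 0 < r) : ν - 1 < omegaIL ν r := by
  have hm : 0 < ν - 1 := sub_pos.2 hν
  have hsqrt : 1 < √(1 + 4 * r / ((ν - 1) * (r + 1) ^ 2)) :=
    Real.lt_sqrt_of_sq_lt (by rw [one_pow]; exact lt_add_of_pos_right 1 (by positivity))
  exact lt_mul_of_one_lt_right hm
    (lt_add_of_pos_right 1 (mul_pos (by positivity) (sub_pos.2 hsqrt)))

lemma omegaIL_mul_sub (hν : 1 < ν) (hr : 0 < r) :
    omegaIL ν r * (omegaIL ν r - ν + 1) = (ν - 1) * r * (ν - omegaIL ν r) := by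
  have hm : 0 < ν - 1 := sub_pos.2 hν
  have hsq := Real.sq_sqrt (show 0 ≤ 1 + 4 * r / ((ν - 1) * (r + 1) ^ 2) by positivity)
  rw [omegaIL]
  generalize √(1 + 4 * r / ((ν - 1) * (r + 1) ^ 2)) = S at hsq
  have hdisc : (ν - 1) * (r + 1) ^ 2 * (S ^ 2 - 1) = 4 * r := by
    rw [hsq]
    field_simp
    ring
  linear_combination (ν - 1) / 4 * hdisc

lemma omegaIL_eq_iff (hν : 1 < ν) (hr : 0 < r) (hΩ : 0 < Ω) :
    omegaIL ν r = Ω ↔ Ω * (Ω - ν + 1) = (ν - 1) * r * (ν - Ω) := by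
  refine ⟨fun h => h ▸ omegaIL_mul_sub hν hr, fun h => ?_⟩
  have hfactor : (omegaIL ν r - Ω) * (Ω + (omegaIL ν r - (ν - 1)) + (ν - 1) * r) = 0 := by
    linear_combination omegaIL_mul_sub hν hr - h
  have hpos : 0 < Ω + (omegaIL ν r - (ν - 1)) + (ν - 1) * r :=
    add_pos (add_pos hΩ (sub_pos.2 (sub_one_lt_omegaIL hν hr))) (mul_pos (sub_pos.2 hν) hr)
  exact sub_eq_zero.1 ((mul_eq_zero.1 hfactor).resolve_right hpos.ne')

lemma omegaIL_mem_Ioo (hν : 1 < ν) (hr : 0 < r) : omegaIL ν r ∈ Ioo (ν - 1) ν := by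
  have hm : 0 < ν - 1 := sub_pos.2 hν
  have hlower := sub_one_lt_omegaIL hν hr
  have hprod : 0 < (ν - 1) * r * (ν - omegaIL ν r) :=
    omegaIL_mul_sub hν hr ▸ mul_pos (hm.trans hlower) (by linarith)
  exact ⟨hlower, sub_pos.1 (pos_of_mul_pos_right hprod (mul_pos hm hr).le)⟩

lemma ratioOfOmega_pos (hν : 1 < ν) (hΩ : Ω ∈ Ioo (ν - 1) ν) : 0 < ratioOfOmega ν Ω :=
  div_pos (mul_pos (by linarith [hΩ.1]) (by linarith [hΩ.1]))
    (mul_pos (sub_pos.2 hν) (sub_pos.2 hΩ.2))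

lemma omegaIL_eq_iff_eq_ratioOfOmega (hν : 1 < ν) (hr : 0 < r) (hΩ : Ω ∈ Ioo (ν - 1) ν) :
    omegaIL ν r = Ω ↔ r = ratioOfOmega ν Ω := by
  have hdenom : (ν - 1) * (ν - Ω) ≠ 0 := (mul_pos (sub_pos.2 hν) (sub_pos.2 hΩ.2)).ne'
  rw [omegaIL_eq_iff hν hr ((sub_pos.2 hν).trans hΩ.1), ratioOfOmega, eq_div_iff hdenom, eq_comm,
    mul_right_comm, mul_comm r, mul_right_comm]

lemma sq_div_eq_ratioOfOmega_mul_div_iff (hν : 1 < ν) (hΩ : Ω ∈ Ioo (ν - 1) ν) {P T : ℝ}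
    (hP : P ≠ 0) (hT : T ≠ 0) :
    Ω ^ 2 / (ν * (ν - 1)) = ratioOfOmega ν Ω * T / P ↔
      P / T = ν * (Ω - ν + 1) / (Ω * (ν - Ω)) := by
  have hΩ0 : Ω ≠ 0 := ((sub_pos.2 hν).trans hΩ.1).ne'
  have hν0 : ν ≠ 0 := (one_pos.trans hν).ne'
  have hm : ν - 1 ≠ 0 := (sub_pos.2 hν).ne'
  have hupper : ν - Ω ≠ 0 := (sub_pos.2 hΩ.2).ne'
  rw [ratioOfOmega]
  field_simp

end OmegaIL

theorem stmt11_general (ν : ℝ) (hν : 1 < ν) :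
    ∃! r : ℝ, 0 < r ∧
      lowerGamma (ν - 1) (omegaIL ν r) / (1 - lowerGamma (ν + 1) (omegaIL ν r)) =
        ν * (omegaIL ν r - ν + 1) / (omegaIL ν r * (ν - omegaIL ν r)) ∧
      omegaIL ν r ^ 2 / (ν * (ν - 1)) =
        r * (1 - lowerGamma (ν + 1) (omegaIL ν r)) / lowerGamma (ν - 1) (omegaIL ν r) := by
  obtain ⟨Ω, ⟨hΩ, hzero⟩, hunique⟩ := existsUnique_identityGap_eq_zero hν
  have hΩ0 : 0 < Ω := (sub_pos.2 hν).trans hΩ.1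
  have hr := ratioOfOmega_pos hν hΩ
  refine ⟨ratioOfOmega ν Ω, ⟨hr, ?_⟩, fun r ⟨hr', hid, _⟩ => ?_⟩
  · have hid := (lowerGamma_div_eq_iff_identityGap_eq_zero hν hΩ).2 hzero
    have hP := (lowerGamma_pos (sub_pos.2 hν) hΩ0).ne'
    have hT := (sub_pos.2 (lowerGamma_lt_one (t := ν + 1) (by linarith) hΩ0.le)).ne'
    rw [(omegaIL_eq_iff_eq_ratioOfOmega hν hr hΩ).2 rfl]
    exact ⟨hid, (sq_div_eq_ratioOfOmega_mul_div_iff hν hΩ hP hT).2 hid⟩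
  · have hmem := omegaIL_mem_Ioo hν hr'
    have hzero' := (lowerGamma_div_eq_iff_identityGap_eq_zero hν hmem).1 hid
    exact (omegaIL_eq_iff_eq_ratioOfOmega hν hr' hΩ).1 (hunique _ ⟨hmem, hzero'⟩)

theorem stmt11 (ν : ℕ) (hν : 2 ≤ ν) :
    ∃! r : ℝ, 0 < r ∧
      lowerGamma ((ν : ℝ) - 1) (OmegaR ν r) /
          (1 - lowerGamma ((ν : ℝ) + 1) (OmegaR ν r)) =
        (ν : ℝ) * (OmegaR ν r - (ν : ℝ) + 1) /
          (OmegaR ν r * ((ν : ℝ) - OmegaR ν r)) ∧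
      (OmegaR ν r) ^ 2 / ((ν : ℝ) * ((ν : ℝ) - 1)) =
        r * (1 - lowerGamma ((ν : ℝ) + 1) (OmegaR ν r)) /
          lowerGamma ((ν : ℝ) - 1) (OmegaR ν r) :=
  stmt11_general ν (by exact_mod_cast hν)
end

section
/- For each integer ν ≥ 2, let Ω*_ν be the unique positive solution of γ(ν−1, Ω) = 1/2, and define R̄_ν = 2(ν−1)^{ν−2} e^{−(ν−1)}/(ν−2)! and R*_ν = 2(Ω*_ν)^{ν−1} e^{−Ω*_ν}/(ν−1)!. Then lim_{ν→∞} R̄_ν / R*_ν = 1. -/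
open Real Filter Set

/-!
The quotient `R̄_ν / R*_ν` compares the values at `ν - 1` and at `Ω*_ν` of the Gamma density of
shape `ν`, whose mode is `ν - 1`. The point `Ω*_ν` is the median of the Gamma distribution of shape
`a = ν - 1`, and this median lies between the mode `a - 1` and the mean `a`. Indeed, let `f` be the
density of shape `a` and let `L` be the logarithmic mean, `L (x, y) = (y - x) / log (y / x)`.

* Since `L` is at most the arithmetic mean, the reflection `s ↦ 2 (a - 1) - s` about the mode
  increases `f` on `(0, a - 1)`, so at most half of the mass lies below `a - 1`.
* Since `L` is at least the geometric mean, the inversion `s ↦ a ^ 2 / s` turns `f` on `(a, ∞)` into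
  a density dominated by `f` on `(0, a)`, so at least half of the mass lies below `a`.

By `1 - 1 / y ≤ log y ≤ y - 1`, the logarithm of the quotient lies between `0` and
`(ν - 1 - Ω*_ν) ^ 2 / Ω*_ν ≤ 1 / (ν - 2)`.
-/

open MeasureTheory Topology

section LogarithmicMean

variable {x y : ℝ}

lemma sub_le_arithMean_mul_log_div (hx : 0 < x) (hxy : x ≤ y) :
    y - x ≤ (x + y) / 2 * log (y / x) := by
  have h := le_log_one_add_of_nonneg (div_nonneg (sub_nonneg.2 hxy) hx.le)
  have h_sum : 0 < x + y := by linarith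
  have h_arg : 1 + (y - x) / x = y / x := by field_simp; ring
  have h_frac : 2 * ((y - x) / x) / ((y - x) / x + 2) = (y - x) / ((x + y) / 2) := by
    have : (y - x) / x + 2 = (x + y) / x := by field_simp; ring
    rw [this]
    field_simp
  rw [h_arg, h_frac, div_le_iff₀ (by positivity)] at h
  linarith

lemma geomMean_mul_log_div_le_sub (hx : 0 < x) (hxy : x ≤ y) :
    √(x * y) * log (y / x) ≤ y - x := by
  have hy : 0 < y := hx.trans_le hxy
  have h_sinh : log √(y / x) ≤ sinh (log √(y / x)) :=
    self_le_sinh_iff.2 (log_nonneg (one_le_sqrt.2 ((one_le_div hx).2 hxy)))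
  rw [sinh_log (by positivity), log_sqrt (by positivity)] at h_sinh
  have h_mul : √(x * y) * (√(y / x) - (√(y / x))⁻¹) = y - x := by
    rw [← sqrt_inv, inv_div, mul_sub, ← sqrt_mul (by positivity), ← sqrt_mul (by positivity),
      show x * y * (y / x) = y ^ 2 by field_simp, show x * y * (x / y) = x ^ 2 by field_simp,
      sqrt_sq hy.le, sqrt_sq hx.le]
  calc √(x * y) * log (y / x)
      ≤ √(x * y) * (√(y / x) - (√(y / x))⁻¹) := by gcongr; linarith
    _ = y - x := h_mul

end LogarithmicMean

section Inversion

lemma image_const_div_Ioi {𝕜 : Type*} [Field 𝕜] [LinearOrder 𝕜] [IsStrictOrderedRing 𝕜] {k c : 𝕜}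
    (hk : 0 < k) (hc : 0 < c) : (fun s ↦ k / s) '' Ioi c = Ioo 0 (k / c) := by
  have h_inv : (fun s ↦ k / s) = (fun s ↦ k * s) ∘ Inv.inv := by
    ext s; exact div_eq_mul_inv k s
  rw [h_inv, image_comp, image_inv_eq_inv, inv_Ioi₀ hc, image_mul_left_Ioo hk, mul_zero,
    div_eq_mul_inv]

lemma const_div_injective {G : Type*} [GroupWithZero G] {k : G} (hk : k ≠ 0) :
    Function.Injective (fun s ↦ k / s) := fun x y h ↦ by
  simpa [div_eq_mul_inv, hk] using h

lemma hasDerivAt_const_div {𝕜 : Type*} [NontriviallyNormedField 𝕜] (k : 𝕜) {s : 𝕜} (hs : s ≠ 0) :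
    HasDerivAt (fun s ↦ k / s) (-(k / s ^ 2)) s := by
  simpa only [div_eq_mul_inv, mul_neg] using (hasDerivAt_inv hs).const_mul k

variable {k c : ℝ} {E : Type*} [NormedAddCommGroup E] [NormedSpace ℝ E]

lemma integral_Ioi_comp_const_div (hk : 0 < k) (hc : 0 < c) (g : ℝ → E) :
    ∫ s in Ioi c, (k / s ^ 2) • g (k / s) = ∫ t in Ioo 0 (k / c), g t := by
  rw [← image_const_div_Ioi hk hc, integral_image_eq_integral_abs_deriv_smul measurableSet_Ioi
    (fun s hs ↦ (hasDerivAt_const_div k (hc.trans hs).ne').hasDerivWithinAt)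
    (const_div_injective hk.ne').injOn]
  simp only [abs_neg, abs_div, abs_pow, sq_abs, abs_of_pos hk]

lemma integrableOn_Ioi_comp_const_div (hk : 0 < k) (hc : 0 < c) {g : ℝ → E}
    (hg : IntegrableOn g (Ioo 0 (k / c))) :
    IntegrableOn (fun s ↦ (k / s ^ 2) • g (k / s)) (Ioi c) := by
  rw [← image_const_div_Ioi hk hc,
    integrableOn_image_iff_integrableOn_abs_deriv_smul measurableSet_Ioi
    (fun s hs ↦ (hasDerivAt_const_div k (hc.trans hs).ne').hasDerivWithinAt)
    (const_div_injective hk.ne').injOn] at hg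
  simpa only [abs_neg, abs_div, abs_pow, sq_abs, abs_of_pos hk] using hg

end Inversion

/-- The unnormalized density of the Gamma distribution of shape `a` and rate `1` at a point
`s ≥ 0`. Normalization is left out so that densities of the same shape are compared without
`Gamma a`. -/
noncomputable def gammaKernel (a s : ℝ) : ℝ := s ^ (a - 1) * exp (-s)

section GammaKernel

variable {a s : ℝ}

lemma gammaKernel_pos (a : ℝ) (hs : 0 < s) : 0 < gammaKernel a s := by
  unfold gammaKernel; positivity

lemma log_gammaKernel (a : ℝ) (hs : 0 < s) : log (gammaKernel a s) = (a - 1) * log s - s := by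
  rw [gammaKernel, log_mul (rpow_pos_of_pos hs _).ne' (exp_pos _).ne', log_rpow hs, log_exp,
    ← sub_eq_add_neg]

lemma gammaKernel_sub_one_div_Gamma (ha : 1 < a) :
    gammaKernel a (a - 1) / Gamma a = (a - 1) ^ (a - 2) * exp (-(a - 1)) / Gamma (a - 1) := by
  have h_pos : 0 < a - 1 := sub_pos.2 ha
  have h_Gamma : Gamma a = (a - 1) * Gamma (a - 1) := by
    simpa using Gamma_add_one h_pos.ne'
  have h_rpow : (a - 1) ^ (a - 1) = (a - 1) ^ (a - 2) * (a - 1) := by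
    rw [← rpow_add_one h_pos.ne']; ring_nf
  rw [gammaKernel, h_Gamma, h_rpow]
  field_simp

lemma integrableOn_gammaKernel (ha : 0 < a) : IntegrableOn (gammaKernel a) (Ioi 0) := by
  simpa only [mul_comm] using! GammaIntegral_convergent ha

lemma integral_Ioi_gammaKernel (ha : 0 < a) : ∫ s in Ioi 0, gammaKernel a s = Gamma a := by
  simp only [Gamma_eq_integral ha, gammaKernel, mul_comm]

lemma intervalIntegrable_gammaKernel (ha : 0 < a) {x y : ℝ} (hx : 0 ≤ x) (hy : 0 ≤ y) :
    IntervalIntegrable (gammaKernel a) volume x y :=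
  intervalIntegrable_iff.2 <|
    (integrableOn_gammaKernel ha).mono_set fun _ hs ↦ (le_min hx hy).trans_lt hs.1

lemma integral_gammaKernel_le_Gamma (ha : 0 < a) {x : ℝ} (hx : 0 ≤ x) :
    ∫ s in 0..x, gammaKernel a s ≤ Gamma a := by
  rw [← integral_Ioi_gammaKernel ha, intervalIntegral.integral_of_le hx]
  refine setIntegral_mono_set (integrableOn_gammaKernel ha) ?_ Ioc_subset_Ioi_self.eventuallyLE
  filter_upwards [ae_restrict_mem measurableSet_Ioi] with s hs using (gammaKernel_pos a hs).le

lemma gammaKernel_le_reflect_mode (hs : 0 < s) (hsa : s ≤ a - 1) :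
    gammaKernel a s ≤ gammaKernel a (2 * (a - 1) - s) := by
  have h_refl : 0 < 2 * (a - 1) - s := by linarith
  have h := sub_le_arithMean_mul_log_div hs (show s ≤ 2 * (a - 1) - s by linarith)
  rw [log_div h_refl.ne' hs.ne'] at h
  rw [← log_le_log_iff (gammaKernel_pos a hs) (gammaKernel_pos a h_refl), log_gammaKernel a hs,
    log_gammaKernel a h_refl]
  linarith

lemma gammaKernel_le_inversion_mean (ha : 0 < a) (has : a ≤ s) :
    gammaKernel a s ≤ a ^ 2 / s ^ 2 * gammaKernel a (a ^ 2 / s) := by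
  have hs : 0 < s := ha.trans_le has
  have h_inv : 0 < a ^ 2 / s := by positivity
  have h_le : a ^ 2 / s ≤ s := (div_le_iff₀ hs).2 (by nlinarith)
  have h := geomMean_mul_log_div_le_sub h_inv h_le
  rw [div_mul_cancel₀ _ hs.ne', sqrt_sq ha.le, log_div hs.ne' h_inv.ne'] at h
  rw [← log_le_log_iff (gammaKernel_pos a hs) (mul_pos (by positivity) (gammaKernel_pos a h_inv)),
    log_mul (by positivity) (gammaKernel_pos a h_inv).ne', log_gammaKernel a hs,
    log_gammaKernel a h_inv]
  have h_log : log (a ^ 2 / s) = 2 * log a - log s := by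
    rw [log_div (by positivity) hs.ne', log_pow, Nat.cast_ofNat]
  have h_log' : log (a ^ 2 / s ^ 2) = 2 * log a - 2 * log s := by
    rw [log_div (by positivity) (by positivity), log_pow, log_pow, Nat.cast_ofNat]
  rw [h_log] at h ⊢
  rw [h_log']
  linarith

lemma two_mul_integral_gammaKernel_mode_le_Gamma (ha : 1 ≤ a) :
    2 * ∫ s in 0..(a - 1), gammaKernel a s ≤ Gamma a := by
  have ha₀ : 0 < a := by linarith
  have hm : 0 ≤ a - 1 := sub_nonneg.2 ha
  have h_int := intervalIntegrable_gammaKernel ha₀ le_rfl hm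
  have h_int' := intervalIntegrable_gammaKernel ha₀ hm (by positivity : 0 ≤ 2 * (a - 1))
  have h_double : 2 * (a - 1) - (a - 1) = a - 1 := by ring
  have h_reflect : ∫ s in 0..(a - 1), gammaKernel a s
      ≤ ∫ s in (a - 1)..(2 * (a - 1)), gammaKernel a s := by
    calc ∫ s in 0..(a - 1), gammaKernel a s
        ≤ ∫ s in 0..(a - 1), gammaKernel a (2 * (a - 1) - s) := by
          refine intervalIntegral.integral_mono_on_of_le_Ioo hm h_int ?_ fun s hs ↦
            gammaKernel_le_reflect_mode hs.1 hs.2.le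
          simpa [h_double] using (h_int'.comp_sub_left (2 * (a - 1))).symm
      _ = ∫ s in (a - 1)..(2 * (a - 1)), gammaKernel a s := by
          rw [intervalIntegral.integral_comp_sub_left (gammaKernel a), h_double, sub_zero]
  have h_add := intervalIntegral.integral_add_adjacent_intervals h_int h_int'
  have h_le := integral_gammaKernel_le_Gamma ha₀ (by positivity : 0 ≤ 2 * (a - 1))
  linarith

lemma Gamma_le_two_mul_integral_gammaKernel_mean (ha : 0 < a) :
    Gamma a ≤ 2 * ∫ s in 0..a, gammaKernel a s := by
  have h_int := integrableOn_gammaKernel ha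
  have h_tail : ∫ s in Ioi a, gammaKernel a s ≤ ∫ s in 0..a, gammaKernel a s := by
    have h_end : a ^ 2 / a = a := by rw [sq, mul_self_div_self]
    calc ∫ s in Ioi a, gammaKernel a s
        ≤ ∫ s in Ioi a, (a ^ 2 / s ^ 2) • gammaKernel a (a ^ 2 / s) :=
          setIntegral_mono_on (h_int.mono_set (Ioi_subset_Ioi ha.le))
            (integrableOn_Ioi_comp_const_div (by positivity) ha
              (h_int.mono_set Ioo_subset_Ioi_self))
            measurableSet_Ioi fun s hs ↦ gammaKernel_le_inversion_mean ha (mem_Ioi.1 hs).le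
      _ = ∫ s in 0..a, gammaKernel a s := by
          rw [integral_Ioi_comp_const_div (by positivity) ha, h_end,
            intervalIntegral.integral_of_le ha.le, integral_Ioc_eq_integral_Ioo]
  have h_add := intervalIntegral.integral_interval_add_Ioi h_int
    (h_int.mono_set (Ioi_subset_Ioi ha.le))
  rw [integral_Ioi_gammaKernel ha] at h_add
  linarith

end GammaKernel

section Median

lemma lowerGamma_eq_integral_gammaKernel_div (a u : ℝ) :
    lowerGamma a u = (∫ s in 0..u, gammaKernel a s) / Gamma a := rfl

variable {a : ℝ}

lemma strictMonoOn_lowerGamma (ha : 0 < a) : StrictMonoOn (lowerGamma a) (Ici 0) := by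
  intro x hx y hy hxy
  simp only [lowerGamma_eq_integral_gammaKernel_div]
  refine div_lt_div_of_pos_right ?_ (Gamma_pos_of_pos ha)
  have h_pos : 0 < ∫ s in x..y, gammaKernel a s :=
    intervalIntegral.intervalIntegral_pos_of_pos_on (intervalIntegrable_gammaKernel ha hx hy)
      (fun s hs ↦ gammaKernel_pos a (lt_of_le_of_lt hx hs.1)) hxy
  rwa [← sub_pos, intervalIntegral.integral_interval_sub_left
    (intervalIntegrable_gammaKernel ha le_rfl hy) (intervalIntegrable_gammaKernel ha le_rfl hx)]

lemma lowerGamma_sub_one_le_half (ha : 1 ≤ a) : lowerGamma a (a - 1) ≤ 1 / 2 := by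
  rw [lowerGamma_eq_integral_gammaKernel_div, div_le_iff₀ (Gamma_pos_of_pos (by linarith))]
  linarith [two_mul_integral_gammaKernel_mode_le_Gamma ha]

lemma half_le_lowerGamma_self (ha : 0 < a) : 1 / 2 ≤ lowerGamma a a := by
  rw [lowerGamma_eq_integral_gammaKernel_div, le_div_iff₀ (Gamma_pos_of_pos ha)]
  linarith [Gamma_le_two_mul_integral_gammaKernel_mean ha]

lemma mem_Icc_of_lowerGamma_eq_half (ha : 0 < a) {w : ℝ} (hw : 0 ≤ w)
    (h : lowerGamma a w = 1 / 2) : w ∈ Icc (a - 1) a := by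
  constructor
  · by_contra! hlt
    have h_lt := strictMonoOn_lowerGamma ha hw (hw.trans hlt.le) hlt
    exact absurd (lowerGamma_sub_one_le_half (by linarith)) (not_le.2 (h ▸ h_lt))
  · by_contra! hlt
    have h_lt := strictMonoOn_lowerGamma ha ha.le hw hlt
    exact absurd (half_le_lowerGamma_self ha) (not_le.2 (h ▸ h_lt))

end Median

section ModeRatio

lemma log_gammaKernel_mode_div_mem_Icc {a w : ℝ} (ha : 1 < a) (hw : 0 < w) :
    log (gammaKernel a (a - 1) / gammaKernel a w) ∈ Icc 0 ((a - 1 - w) ^ 2 / w) := by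
  have hm : 0 < a - 1 := sub_pos.2 ha
  have h_log : log (gammaKernel a (a - 1) / gammaKernel a w)
      = (a - 1) * log ((a - 1) / w) - (a - 1 - w) := by
    rw [log_div (gammaKernel_pos a hm).ne' (gammaKernel_pos a hw).ne', log_gammaKernel a hm,
      log_gammaKernel a hw, log_div hm.ne' hw.ne']
    ring
  rw [h_log]
  constructor
  · calc 0 = (a - 1) * (1 - ((a - 1) / w)⁻¹) - (a - 1 - w) := by field_simp; ring
      _ ≤ _ := by gcongr; exact one_sub_inv_le_log_of_pos (by positivity)
  · calc (a - 1) * log ((a - 1) / w) - (a - 1 - w)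
        ≤ (a - 1) * ((a - 1) / w - 1) - (a - 1 - w) := by
          gcongr; exact log_le_sub_one_of_pos (by positivity)
      _ = (a - 1 - w) ^ 2 / w := by field_simp

lemma tendsto_gammaKernel_mode_div {ι : Type*} {l : Filter ι} {a w : ι → ℝ}
    (ha : ∀ᶠ i in l, 1 < a i) (hw : ∀ᶠ i in l, 0 < w i)
    (h : Tendsto (fun i ↦ (a i - 1 - w i) ^ 2 / w i) l (𝓝 0)) :
    Tendsto (fun i ↦ gammaKernel (a i) (a i - 1) / gammaKernel (a i) (w i)) l (𝓝 1) := by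
  have h_mem := ha.and hw |>.mono fun i hi ↦ log_gammaKernel_mode_div_mem_Icc hi.1 hi.2
  have h_log := tendsto_of_tendsto_of_tendsto_of_le_of_le' tendsto_const_nhds h
    (h_mem.mono fun _ hi ↦ hi.1) (h_mem.mono fun _ hi ↦ hi.2)
  have h_exp := (continuous_exp.tendsto 0).comp h_log
  rw [exp_zero] at h_exp
  refine h_exp.congr' ?_
  filter_upwards [ha, hw] with i hai hwi
  exact exp_log (div_pos (gammaKernel_pos _ (sub_pos.2 hai)) (gammaKernel_pos _ hwi))

end ModeRatio

theorem stmt12_general {ι : Type*} {l : Filter ι} {ν Ω : ι → ℝ} (hν : Tendsto ν l atTop)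
    (hΩ : ∀ᶠ i in l, 0 < Ω i ∧ lowerGamma (ν i - 1) (Ω i) = 1 / 2) :
    Tendsto
      (fun i ↦
        (2 * (ν i - 1) ^ (ν i - 2) * exp (-(ν i - 1)) / Gamma (ν i - 1)) /
          (2 * Ω i ^ (ν i - 1) * exp (-Ω i) / Gamma (ν i)))
      l (𝓝 1) := by
  have h_two : ∀ᶠ i in l, 2 < ν i := hν.eventually_gt_atTop 2
  have h_median : ∀ᶠ i in l, Ω i ∈ Icc (ν i - 1 - 1) (ν i - 1) := by
    filter_upwards [h_two, hΩ] with i hi hΩi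
    exact mem_Icc_of_lowerGamma_eq_half (by linarith) hΩi.1.le hΩi.2
  have h_dist : Tendsto (fun i ↦ (ν i - 1 - Ω i) ^ 2 / Ω i) l (𝓝 0) := by
    have h_bound : Tendsto (fun i ↦ 1 / (ν i - 2)) l (𝓝 0) :=
      (tendsto_atTop_add_const_right l (-2) hν).const_div_atTop 1
    refine squeeze_zero' (hΩ.mono fun i hi ↦ div_nonneg (sq_nonneg _) hi.1.le) ?_ h_bound
    filter_upwards [h_two, h_median] with i hi hΩi
    obtain ⟨h_lower, h_upper⟩ := hΩi
    exact div_le_div₀ zero_le_one (by nlinarith) (by linarith) (by linarith)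
  refine (tendsto_gammaKernel_mode_div (h_two.mono fun i hi ↦ by linarith)
    (hΩ.mono fun _ hi ↦ hi.1) h_dist).congr' ?_
  filter_upwards [h_two] with i hi
  have h_Gamma : Gamma (ν i) ≠ 0 := (Gamma_pos_of_pos (by linarith)).ne'
  calc gammaKernel (ν i) (ν i - 1) / gammaKernel (ν i) (Ω i)
      = 2 * (gammaKernel (ν i) (ν i - 1) / Gamma (ν i)) /
          (2 * (gammaKernel (ν i) (Ω i) / Gamma (ν i))) := by
        rw [mul_div_mul_left _ _ two_ne_zero, div_div_div_cancel_right₀ h_Gamma]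
    _ = _ := by
        rw [gammaKernel_sub_one_div_Gamma (by linarith), gammaKernel]
        simp only [mul_assoc, mul_div_assoc]

theorem stmt12 (Ωs : ℕ → ℝ)
    (hΩs : ∀ ν : ℕ, 2 ≤ ν → 0 < Ωs ν ∧ lowerGamma ((ν : ℝ) - 1) (Ωs ν) = 1 / 2) :
    Filter.Tendsto
      (fun ν : ℕ =>
        (2 * ((ν : ℝ) - 1) ^ (ν - 2) * Real.exp (-((ν : ℝ) - 1)) / (Nat.factorial (ν - 2))) /
          (2 * (Ωs ν) ^ (ν - 1) * Real.exp (-(Ωs ν)) / (Nat.factorial (ν - 1))))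
      Filter.atTop (nhds 1) := by
  refine (stmt12_general tendsto_natCast_atTop_atTop
    ((eventually_ge_atTop 2).mono hΩs)).congr' ?_
  filter_upwards [eventually_ge_atTop 2] with ν hν
  simp only [← rpow_natCast, ← Gamma_nat_eq_factorial, Nat.cast_sub hν,
    Nat.cast_sub (one_le_two.trans hν), Nat.cast_ofNat, Nat.cast_one]
  ring_nf
end

section
/- For any sequence of real numbers (δ_k) with 0 ≤ δ_k ≤ 1 for all k, one has lim_{k→∞} γ(k, k+δ_k) = 1/2. -/
/-!
This is the central limit theorem for the Gamma distribution, by Laplace's method. For `a = t - 1`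
the integrand `s ^ a * exp (-s)` of `Γ(t)` peaks at `s = a` with width `√a`. Rescaled to
`s = a + √a * x` and divided by its peak value, it becomes
`exp (a * (log (1 + x / √a) - x / √a))`, which tends to `exp (-x² / 2)` because
`log (1 + z) = z - z² / 2 + o(z²)`, and which is dominated for all `a ≥ 1` because
`log (1 + z) = 2 log √(1 + z) ≤ 2 (√(1 + z) - 1) = z - (√(1 + z) - 1)²`.

Both the integral up to `u` and the full integral `Γ(t)` carry the same factor under this
substitution, so by dominated convergence their quotient tends to the standard normal distribution
function at the limit of `(u - t) / √t`; no asymptotic formula for `Γ` is needed. A bounded shift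
`u - t` corresponds to the median `0` of the normal law.
-/

open Real Filter

open MeasureTheory ProbabilityTheory Set Topology Asymptotics

section Integration

lemma eventually_mem_Iic_iff_of_ne {α ι : Type*} [LinearOrder α] [TopologicalSpace α]
    [OrderTopology α] {l : Filter ι} {v : ι → α} {x y : α} (hv : Tendsto v l (𝓝 y)) (hx : x ≠ y) :
    ∀ᶠ i in l, x ∈ Iic (v i) ↔ x ∈ Iic y := by
  rcases hx.lt_or_gt with hxy | hxy
  · filter_upwards [hv.eventually_const_lt hxy] with i hi using iff_of_true hi.le hxy.le
  · filter_upwards [hv.eventually_lt_const hxy] with i hi using iff_of_false hi.not_ge hxy.not_ge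

lemma integrable_exp_neg_mul_abs {b : ℝ} (hb : 0 < b) :
    Integrable fun x : ℝ => exp (-b * |x|) := by
  rw [← integrableOn_univ, ← Iic_union_Ioi (a := (0 : ℝ))]
  refine IntegrableOn.union ?_ ?_
  · refine (integrableOn_exp_mul_Iic hb 0).congr_fun (fun x hx => ?_) measurableSet_Iic
    simp only [abs_of_nonpos (mem_Iic.1 hx), neg_mul_neg]
  · refine (integrableOn_exp_mul_Ioi (neg_neg_of_pos hb) 0).congr_fun (fun x hx => ?_)
      measurableSet_Ioi
    simp only [abs_of_pos (mem_Ioi.1 hx)]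

lemma setIntegral_preimage_add_mul {E : Type*} [NormedAddCommGroup E] [NormedSpace ℝ E]
    (f : ℝ → E) (a c : ℝ) {s : Set ℝ} (hs : MeasurableSet s) :
    ∫ x in (fun x => a + c * x) ⁻¹' s, f (a + c * x) = |c⁻¹| • ∫ y in s, f y := by
  rw [← integral_indicator (hs.preimage (by fun_prop)), ← integral_indicator hs,
    ← integral_add_left_eq_self (s.indicator f) a, ← Measure.integral_comp_mul_left]
  rfl

lemma tendsto_setIntegral_filter_of_dominated_convergence {α ι E : Type*} [MeasurableSpace α]
    {μ : Measure α} [NormedAddCommGroup E] [NormedSpace ℝ E] {l : Filter ι}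
    [l.IsCountablyGenerated] {F : ι → α → E} {f : α → E} {S : ι → Set α} {T : Set α}
    (bound : α → ℝ) (hS : ∀ i, MeasurableSet (S i)) (hT : MeasurableSet T)
    (hF_meas : ∀ᶠ i in l, AEStronglyMeasurable (F i) μ)
    (h_bound : ∀ᶠ i in l, ∀ᵐ x ∂μ, ‖F i x‖ ≤ bound x) (bound_integrable : Integrable bound μ)
    (h_lim : ∀ᵐ x ∂μ, Tendsto (fun i => F i x) l (𝓝 (f x)))
    (h_mem : ∀ᵐ x ∂μ, ∀ᶠ i in l, x ∈ S i ↔ x ∈ T) :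
    Tendsto (fun i => ∫ x in S i, F i x ∂μ) l (𝓝 (∫ x in T, f x ∂μ)) := by
  simp only [← integral_indicator (hS _), ← integral_indicator hT]
  refine tendsto_integral_filter_of_dominated_convergence bound ?_ ?_ bound_integrable ?_
  · filter_upwards [hF_meas] with i hi using hi.indicator (hS i)
  · filter_upwards [h_bound] with i hi
    filter_upwards [hi] with x hx using (norm_indicator_le_norm_self _ _).trans hx
  · filter_upwards [h_lim, h_mem] with x hx hmem
    by_cases hxT : x ∈ T
    · rw [indicator_of_mem hxT]
      refine hx.congr' ?_
      filter_upwards [hmem] with i hi using (indicator_of_mem (hi.2 hxT) _).symm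
    · rw [indicator_of_notMem hxT]
      refine tendsto_const_nhds.congr' ?_
      filter_upwards [hmem] with i hi using (indicator_of_notMem (mt hi.1 hxT) _).symm

end Integration

section NormalDistribution

lemma cdf_zero_of_isNegInvariant (μ : Measure ℝ) [IsProbabilityMeasure μ] [NullSingletonClass μ]
    [μ.IsNegInvariant] : cdf μ 0 = 1 / 2 := by
  have hsymm : μ.real (Ioi 0) = μ.real (Iic 0) := by
    rw [measureReal_def, measureReal_def, ← Measure.measure_neg μ (Iic 0), neg_Iic, neg_zero,
      measure_congr Ioi_ae_eq_Ici]
  have hsum : μ.real (Iic 0) + μ.real (Ioi 0) = 1 := by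
    rw [← compl_Iic, probReal_add_probReal_compl measurableSet_Iic]
  rw [cdf_eq_real]
  linarith

lemma cdf_gaussianReal_zero {v : NNReal} (hv : v ≠ 0) : cdf (gaussianReal 0 v) 0 = 1 / 2 := by
  have := nullSingletonClass_gaussianReal (μ := 0) hv
  have : (gaussianReal 0 v).IsNegInvariant :=
    ⟨(gaussianReal_map_neg (μ := 0)).trans (by rw [neg_zero])⟩
  exact cdf_zero_of_isNegInvariant _

lemma exp_neg_sq_div_two_eq_gaussianPDFReal (x : ℝ) :
    exp (-x ^ 2 / 2) = √(2 * π) * gaussianPDFReal 0 1 x := by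
  rw [gaussianPDFReal, NNReal.coe_one, mul_one, mul_one, sub_zero,
    mul_inv_cancel_left₀ (by positivity)]

lemma integral_exp_neg_sq_div_two : ∫ x : ℝ, exp (-x ^ 2 / 2) = √(2 * π) := by
  simp only [exp_neg_sq_div_two_eq_gaussianPDFReal]
  rw [integral_const_mul, integral_gaussianPDFReal_eq_one 0 one_ne_zero, mul_one]

lemma cdf_gaussianReal_eq_setIntegral_div (y : ℝ) :
    cdf (gaussianReal 0 1) y = (∫ x in Iic y, exp (-x ^ 2 / 2)) / √(2 * π) := by
  simp only [exp_neg_sq_div_two_eq_gaussianPDFReal]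
  rw [integral_const_mul, mul_div_cancel_left₀ _ (by positivity), cdf_eq_real, measureReal_def,
    gaussianReal_apply_eq_integral 0 one_ne_zero,
    ENNReal.toReal_ofReal (integral_nonneg fun x => gaussianPDFReal_nonneg 0 1 x)]

end NormalDistribution

section Logarithm

lemma log_one_add_le_sub_sq_div {z : ℝ} (hz : -1 < z) :
    log (1 + z) ≤ z - z ^ 2 / (4 + 2 * |z|) := by
  have hw : 0 < 1 + z := by linarith
  set r := √(1 + z)
  have hr_pos : 0 < r := sqrt_pos.2 hw
  have hr_sq : r ^ 2 = 1 + z := sq_sqrt hw.le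
  have hlog : log (1 + z) ≤ z - (r - 1) ^ 2 := by
    have := log_le_sub_one_of_pos hr_pos
    rw [← hr_sq, log_pow]
    push_cast
    linarith
  have hquot : z ^ 2 / (4 + 2 * |z|) ≤ (r - 1) ^ 2 := by
    have hden : (r + 1) ^ 2 ≤ 4 + 2 * |z| := by nlinarith [sq_nonneg (r - 1), le_abs_self z]
    rw [div_le_iff₀ (by positivity)]
    calc z ^ 2 = (r - 1) ^ 2 * (r + 1) ^ 2 := by rw [eq_sub_of_add_eq' hr_sq.symm]; ring
      _ ≤ (r - 1) ^ 2 * (4 + 2 * |z|) := by gcongr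
  linarith

lemma mul_log_one_add_sub_le {a x : ℝ} (ha : 1 ≤ a) (hx : -√a < x) :
    a * (log (1 + x / √a) - x / √a) ≤ 1 - (1 / 2) * |x| := by
  have hs : 1 ≤ √a := one_le_sqrt.2 ha
  have hz : -1 < x / √a := by rwa [lt_div_iff₀ (by positivity), neg_one_mul]
  have hlog := log_one_add_le_sub_sq_div hz
  calc a * (log (1 + x / √a) - x / √a)
      ≤ a * -((x / √a) ^ 2 / (4 + 2 * |x / √a|)) := by gcongr; linarith
    _ = -(|x| ^ 2 / (4 + 2 * (|x| / √a))) := by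
        rw [abs_div, abs_of_pos (by positivity : 0 < √a), div_pow, sq_sqrt (by positivity), sq_abs]
        field_simp
    _ ≤ -(|x| ^ 2 / (4 + 2 * |x|)) := by gcongr; exact div_le_self (abs_nonneg x) hs
    _ ≤ 1 - (1 / 2) * |x| := by
        rw [neg_le, le_div_iff₀ (by positivity)]
        linarith

lemma log_one_add_sub_isLittleO :
    (fun z : ℝ => log (1 + z) - (z - z ^ 2 / 2)) =o[𝓝 0] fun z => z ^ 2 := by
  have hcube : (fun z : ℝ => log (1 + z) - (z - z ^ 2 / 2)) =O[𝓝 0] fun z => z ^ 3 := by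
    refine IsBigO.of_bound 2 ?_
    filter_upwards [eventually_abs_sub_lt (0 : ℝ) one_half_pos] with z hz
    rw [sub_zero] at hz
    have hlog := abs_log_sub_add_sum_range_le (x := -z) (by rw [abs_neg]; linarith) 2
    rw [abs_neg, sub_neg_eq_add] at hlog
    calc ‖log (1 + z) - (z - z ^ 2 / 2)‖
        = |∑ i ∈ Finset.range 2, (-z) ^ (i + 1) / (i + 1) + log (1 + z)| := by
          rw [Real.norm_eq_abs]
          congr 1
          norm_num [Finset.sum_range_succ]
          ring
      _ ≤ |z| ^ 3 / (1 - |z|) := hlog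
      _ ≤ |z| ^ 3 / (1 / 2) := by gcongr; linarith
      _ = 2 * ‖z ^ 3‖ := by rw [norm_pow, Real.norm_eq_abs]; ring
  exact hcube.trans_isLittleO (isLittleO_pow_pow (by norm_num))

lemma tendsto_mul_log_one_add_sub (x : ℝ) :
    Tendsto (fun a => a * (log (1 + x / √a) - x / √a)) atTop (𝓝 (-x ^ 2 / 2)) := by
  have hz : Tendsto (fun a => x / √a) atTop (𝓝 0) := tendsto_sqrt_atTop.const_div_atTop x
  have hsq : ∀ᶠ a in atTop, a * (x / √a) ^ 2 = x ^ 2 := by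
    filter_upwards [eventually_gt_atTop 0] with a ha
    rw [div_pow, sq_sqrt ha.le]
    field_simp
  have herr : Tendsto (fun a => a * (log (1 + x / √a) - (x / √a - (x / √a) ^ 2 / 2))) atTop
      (𝓝 0) := by
    have h := (isBigO_refl (fun a : ℝ => a) atTop).mul_isLittleO
      (log_one_add_sub_isLittleO.comp_tendsto hz)
    exact (h.trans_eventuallyEq hsq).tendsto_zero_of_tendsto tendsto_const_nhds
  refine (zero_add (-x ^ 2 / 2) ▸ herr.add_const (-x ^ 2 / 2)).congr' ?_
  filter_upwards [hsq] with a ha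
  rw [← ha]
  ring

end Logarithm

section RescaledIntegrand

/-- The integrand `s ^ a * exp (-s)` of `Γ(a + 1)`, extended by zero to the whole real line. -/
noncomputable def gammaIntegrand (a : ℝ) : ℝ → ℝ :=
  (Ioi 0).indicator fun s => s ^ a * exp (-s)

/-- The integrand of `Γ(a + 1)`, centred at its maximum `a`, scaled by the width `√a` of the peak
and normalized to have maximum `1`. -/
noncomputable def rescaledGammaIntegrand (a x : ℝ) : ℝ :=
  gammaIntegrand a (a + √a * x) / gammaIntegrand a a

lemma gammaIntegrand_of_pos (a : ℝ) {s : ℝ} (hs : 0 < s) :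
    gammaIntegrand a s = s ^ a * exp (-s) :=
  indicator_of_mem (mem_Ioi.2 hs) _

lemma gammaIntegrand_self_pos {a : ℝ} (ha : 0 < a) : 0 < gammaIntegrand a a := by
  rw [gammaIntegrand_of_pos a ha]
  positivity

lemma measurable_rescaledGammaIntegrand (a : ℝ) : Measurable (rescaledGammaIntegrand a) := by
  have : Measurable (gammaIntegrand a) := Measurable.indicator (by fun_prop) measurableSet_Ioi
  unfold rescaledGammaIntegrand
  fun_prop

lemma add_sqrt_mul_pos_iff {a x : ℝ} (ha : 0 < a) : 0 < a + √a * x ↔ -√a < x := by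
  have : a + √a * x = √a * (x - -√a) := by linear_combination -(mul_self_sqrt ha.le)
  rw [this, mul_pos_iff_of_pos_left (sqrt_pos.2 ha), sub_pos]

lemma rescaledGammaIntegrand_of_le {a x : ℝ} (ha : 0 < a) (hx : x ≤ -√a) :
    rescaledGammaIntegrand a x = 0 := by
  have : a + √a * x ∉ Ioi 0 := (add_sqrt_mul_pos_iff ha).not.2 hx.not_gt
  rw [rescaledGammaIntegrand, gammaIntegrand, indicator_of_notMem this, zero_div]

lemma rescaledGammaIntegrand_of_lt {a x : ℝ} (ha : 0 < a) (hx : -√a < x) :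
    rescaledGammaIntegrand a x = exp (a * (log (1 + x / √a) - x / √a)) := by
  have hs : 0 < a + √a * x := (add_sqrt_mul_pos_iff ha).2 hx
  have hz : a * (x / √a) = √a * x := by
    rw [mul_div_assoc', mul_comm, mul_div_assoc, div_sqrt, mul_comm]
  have hfactor : (a + √a * x) / a = 1 + x / √a := by
    rw [← hz, ← mul_one_add, mul_div_cancel_left₀ _ ha.ne']
  have hlog : log (1 + x / √a) = log (a + √a * x) - log a := by
    rw [← hfactor, log_div hs.ne' ha.ne']
  rw [rescaledGammaIntegrand, gammaIntegrand_of_pos a hs, gammaIntegrand_of_pos a ha,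
    rpow_def_of_pos hs, rpow_def_of_pos ha, ← exp_add, ← exp_add, ← exp_sub, hlog, mul_sub, hz]
  ring_nf

lemma norm_rescaledGammaIntegrand_le {a : ℝ} (ha : 1 ≤ a) (x : ℝ) :
    ‖rescaledGammaIntegrand a x‖ ≤ exp 1 * exp (-(1 / 2) * |x|) := by
  have ha₀ : 0 < a := by linarith
  rw [← exp_add, neg_mul, ← sub_eq_add_neg]
  rcases le_or_gt x (-√a) with hx | hx
  · rw [rescaledGammaIntegrand_of_le ha₀ hx, norm_zero]
    positivity
  · rw [rescaledGammaIntegrand_of_lt ha₀ hx, Real.norm_eq_abs, abs_exp]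
    exact exp_le_exp.2 (mul_log_one_add_sub_le ha hx)

lemma tendsto_rescaledGammaIntegrand (x : ℝ) :
    Tendsto (fun a => rescaledGammaIntegrand a x) atTop (𝓝 (exp (-x ^ 2 / 2))) := by
  refine (tendsto_mul_log_one_add_sub x).rexp.congr' ?_
  filter_upwards [eventually_gt_atTop 0, tendsto_sqrt_atTop.eventually_gt_atTop (-x)] with a ha hx
  rw [rescaledGammaIntegrand_of_lt ha (neg_lt.1 hx)]

lemma tendsto_setIntegral_rescaledGammaIntegrand {ι : Type*} {l : Filter ι}
    [l.IsCountablyGenerated] {a : ι → ℝ} (ha : Tendsto a l atTop) {S : ι → Set ℝ} {T : Set ℝ}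
    (hS : ∀ i, MeasurableSet (S i)) (hT : MeasurableSet T)
    (h_mem : ∀ᵐ x, ∀ᶠ i in l, x ∈ S i ↔ x ∈ T) :
    Tendsto (fun i => ∫ x in S i, rescaledGammaIntegrand (a i) x) l
      (𝓝 (∫ x in T, exp (-x ^ 2 / 2))) := by
  refine tendsto_setIntegral_filter_of_dominated_convergence
    (fun x => exp 1 * exp (-(1 / 2) * |x|)) hS hT ?_ ?_
    ((integrable_exp_neg_mul_abs one_half_pos).const_mul _) ?_ h_mem
  · exact .of_forall fun i => (measurable_rescaledGammaIntegrand (a i)).aestronglyMeasurable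
  · filter_upwards [ha.eventually_ge_atTop 1] with i hi
      using .of_forall (norm_rescaledGammaIntegrand_le hi)
  · exact .of_forall fun x => (tendsto_rescaledGammaIntegrand x).comp ha

end RescaledIntegrand

section IncompleteGamma

lemma lowerGamma_eq_setIntegral_div {t u : ℝ} (ht : 0 < t) (hu : 0 ≤ u) :
    lowerGamma t u = (∫ s in Iic u, gammaIntegrand (t - 1) s) / ∫ s, gammaIntegrand (t - 1) s := by
  simp only [lowerGamma, gammaIntegrand]
  rw [setIntegral_indicator measurableSet_Ioi, integral_indicator measurableSet_Ioi, Iic_inter_Ioi,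
    intervalIntegral.integral_of_le hu, Gamma_eq_integral ht]
  simp only [mul_comm]

lemma setIntegral_preimage_rescaledGammaIntegrand (a : ℝ) {s : Set ℝ} (hs : MeasurableSet s) :
    ∫ x in (fun x => a + √a * x) ⁻¹' s, rescaledGammaIntegrand a x
      = |(√a)⁻¹| * (∫ y in s, gammaIntegrand a y) / gammaIntegrand a a := by
  simp only [rescaledGammaIntegrand]
  rw [integral_div, setIntegral_preimage_add_mul _ _ _ hs, smul_eq_mul]

lemma lowerGamma_eq_rescaledGammaIntegrand_quotient {t u : ℝ} (ht : 1 < t) (hu : 0 ≤ u) :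
    lowerGamma t u = (∫ x in Iic ((u - (t - 1)) / √(t - 1)), rescaledGammaIntegrand (t - 1) x)
      / ∫ x, rescaledGammaIntegrand (t - 1) x := by
  have ha : 0 < t - 1 := sub_pos.2 ht
  have hpre : Iic ((u - (t - 1)) / √(t - 1)) = (fun x => t - 1 + √(t - 1) * x) ⁻¹' Iic u := by
    ext x
    rw [mem_preimage, mem_Iic, mem_Iic, le_div_iff₀' (sqrt_pos.2 ha), le_sub_iff_add_le']
  have hpeak := (gammaIntegrand_self_pos ha).ne'
  have hscale : |(√(t - 1))⁻¹| ≠ 0 := by positivity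
  have hfull := setIntegral_preimage_rescaledGammaIntegrand (t - 1) MeasurableSet.univ
  rw [preimage_univ, setIntegral_univ, setIntegral_univ] at hfull
  rw [hpre, setIntegral_preimage_rescaledGammaIntegrand _ measurableSet_Iic, hfull,
    div_div_div_cancel_right₀ hpeak, mul_div_mul_left _ _ hscale,
    lowerGamma_eq_setIntegral_div (by linarith) hu]

lemma tendsto_rescaledGammaIntegrand_quotient (y : ℝ) :
    Tendsto (fun p : ℝ × ℝ => (∫ x in Iic p.2, rescaledGammaIntegrand p.1 x)
      / ∫ x, rescaledGammaIntegrand p.1 x) (atTop ×ˢ 𝓝 y) (𝓝 (cdf (gaussianReal 0 1) y)) := by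
  have hpartial : Tendsto (fun p : ℝ × ℝ => ∫ x in Iic p.2, rescaledGammaIntegrand p.1 x)
      (atTop ×ˢ 𝓝 y) (𝓝 (∫ x in Iic y, exp (-x ^ 2 / 2))) := by
    refine tendsto_setIntegral_rescaledGammaIntegrand tendsto_fst (fun _ => measurableSet_Iic)
      measurableSet_Iic ?_
    filter_upwards [Measure.ae_ne volume y] with x hx
      using eventually_mem_Iic_iff_of_ne tendsto_snd hx
  have hfull : Tendsto (fun p : ℝ × ℝ => ∫ x, rescaledGammaIntegrand p.1 x)
      (atTop ×ˢ 𝓝 y) (𝓝 √(2 * π)) := by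
    simpa only [setIntegral_univ, integral_exp_neg_sq_div_two] using
      tendsto_setIntegral_rescaledGammaIntegrand tendsto_fst (fun _ => .univ) .univ
        (.of_forall fun _ => .of_forall fun _ => Iff.rfl)
  rw [cdf_gaussianReal_eq_setIntegral_div]
  exact hpartial.div hfull (by positivity)

end IncompleteGamma

section CentralLimit

variable {ι : Type*} {l : Filter ι} {t u : ι → ℝ} {y : ℝ}

lemma tendsto_sub_sub_one_div_sqrt (ht : Tendsto t l atTop)
    (hu : Tendsto (fun i => (u i - t i) / √(t i)) l (𝓝 y)) :
    Tendsto (fun i => (u i - (t i - 1)) / √(t i - 1)) l (𝓝 y) := by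
  have ha : Tendsto (fun i => t i - 1) l atTop := tendsto_atTop_add_const_right l (-1) ht
  have hinv : Tendsto (fun i => 1 / √(t i - 1)) l (𝓝 0) :=
    (tendsto_sqrt_atTop.comp ha).const_div_atTop 1
  have hratio : Tendsto (fun i => √(t i / (t i - 1))) l (𝓝 1) := by
    have h : Tendsto (fun i => √(1 + 1 / (t i - 1))) l (𝓝 √(1 + 0)) :=
      ((ha.const_div_atTop 1).const_add 1).sqrt
    rw [add_zero, sqrt_one] at h
    refine h.congr' ?_
    filter_upwards [ha.eventually_gt_atTop 0] with i hi
    rw [one_add_div hi.ne', sub_add_cancel]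
  have h := (hu.mul hratio).add hinv
  rw [mul_one, add_zero] at h
  refine h.congr' ?_
  filter_upwards [ht.eventually_gt_atTop 1] with i hi
  have hi₀ : 0 < √(t i) := sqrt_pos.2 (by linarith)
  rw [sqrt_div (by linarith), div_mul_div_cancel₀ hi₀.ne', ← add_div, sub_sub_eq_add_sub]
  ring

lemma eventually_nonneg_of_tendsto_sub_div_sqrt (ht : Tendsto t l atTop)
    (hu : Tendsto (fun i => (u i - t i) / √(t i)) l (𝓝 y)) :
    ∀ᶠ i in l, 0 ≤ u i := by
  have hsum : Tendsto (fun i => √(t i) + (u i - t i) / √(t i)) l atTop :=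
    (tendsto_sqrt_atTop.comp ht).atTop_add hu
  filter_upwards [ht.eventually_gt_atTop 0, hsum.eventually_ge_atTop 0] with i hti hi
  have h : u i = √(t i) * (√(t i) + (u i - t i) / √(t i)) := by
    rw [mul_add, mul_self_sqrt hti.le, mul_div_cancel₀ _ (sqrt_pos.2 hti).ne', add_sub_cancel]
  rw [h]
  positivity

theorem stmt17_general (ht : Tendsto t l atTop)
    (hu : Tendsto (fun i => (u i - t i) / √(t i)) l (𝓝 y)) :
    Tendsto (fun i => lowerGamma (t i) (u i)) l (𝓝 (cdf (gaussianReal 0 1) y)) := by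
  have ha : Tendsto (fun i => t i - 1) l atTop := tendsto_atTop_add_const_right l (-1) ht
  have hv := tendsto_sub_sub_one_div_sqrt ht hu
  refine ((tendsto_rescaledGammaIntegrand_quotient y).comp (ha.prodMk hv)).congr' ?_
  filter_upwards [ht.eventually_gt_atTop 1, eventually_nonneg_of_tendsto_sub_div_sqrt ht hu]
    with i hi hui using (lowerGamma_eq_rescaledGammaIntegrand_quotient hi hui).symm

lemma tendsto_div_sqrt_natCast_zero {δ : ℕ → ℝ} {b B : ℝ} (hb : ∀ k, b ≤ δ k) (hB : ∀ k, δ k ≤ B) :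
    Tendsto (fun k : ℕ => δ k / √(k : ℝ)) atTop (𝓝 0) :=
  tendsto_bdd_div_atTop_nhds_zero (.of_forall hb) (.of_forall hB)
    (tendsto_sqrt_atTop.comp tendsto_natCast_atTop_atTop)

end CentralLimit

theorem stmt17 (δ : ℕ → ℝ) (hδ : ∀ k : ℕ, 0 ≤ δ k ∧ δ k ≤ 1) :
    Filter.Tendsto (fun k : ℕ => lowerGamma (k : ℝ) ((k : ℝ) + δ k))
      Filter.atTop (nhds (1 / 2)) := by
  rw [← cdf_gaussianReal_zero one_ne_zero]
  exact stmt17_general tendsto_natCast_atTop_atTop (by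
    simpa only [add_sub_cancel_left] using
      tendsto_div_sqrt_natCast_zero (fun k => (hδ k).1) (fun k => (hδ k).2))
end
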